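/- Let [a,b] ⊂ ℝ be a compact interval and let E ⊂ (a,b) be a set of Lebesgue measure zero. Suppose F is a real-valued function defined and differentiable at every point of [a,b] \ E, with derivative f there, and suppose F is basically summable (BS_δ) on E to the real number ℜ. Then the extended function f_ex (equal to f off E and to 0 on E) is generalized Riemann (Henstock–Kurzweil) integrable on [a,b], and its integral equals (F(b) − F(a)) − ℜ; equivalently, F(b) − F(a) = (HK)∫_a^b f_ex(x) dx + ℜ. -/

import Mathlib

open scoped Classical

/-- A tagged partition of `[a,b]`: division points `t 0 = a ≤ t 1 ≤ ⋯ ≤ t n = b`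
with a tag `tag i ∈ [t i, t (i+1)]` for each subinterval. -/
structure TaggedPartition (a b : ℝ) where
  n : ℕ
  t : ℕ → ℝ
  tag : ℕ → ℝ
  t_zero : t 0 = a
  t_last : t n = b
  mono : ∀ i < n, t i ≤ t (i + 1)
  tag_mem : ∀ i < n, tag i ∈ Set.Icc (t i) (t (i + 1))

/-- A gauge on `[a,b]` is a function that is positive on `[a,b]`. -/
def IsGauge (a b : ℝ) (δ : ℝ → ℝ) : Prop :=
  ∀ x ∈ Set.Icc a b, 0 < δ x

/-- `P` is `δ`-fine: each subinterval is contained in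
`(tag i - δ (tag i), tag i + δ (tag i))`. -/
def TaggedPartition.IsFine {a b : ℝ} (P : TaggedPartition a b) (δ : ℝ → ℝ) : Prop :=
  ∀ i < P.n, Set.Icc (P.t i) (P.t (i + 1)) ⊆
    Set.Ioo (P.tag i - δ (P.tag i)) (P.tag i + δ (P.tag i))

/-- Every subinterval of `P` that intersects `E` has its tag in `E`
(membership in the family `𝒫_δ[a,b]|_E`). -/
def TaggedPartition.TagsIn {a b : ℝ} (P : TaggedPartition a b) (E : Set ℝ) : Prop :=
  ∀ i < P.n, (Set.Icc (P.t i) (P.t (i + 1)) ∩ E).Nonempty → P.tag i ∈ E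

/-- The Riemann sum `Σ g(xᵢ)(bᵢ - aᵢ)` of `g` over `P`. -/
def TaggedPartition.riemannSum {a b : ℝ} (P : TaggedPartition a b) (g : ℝ → ℝ) : ℝ :=
  ∑ i ∈ Finset.range P.n, g (P.tag i) * (P.t (i + 1) - P.t i)

/-- The sum `Σ (F(bᵢ) - F(aᵢ))` of increments of `F` over the restriction `P|_E`,
i.e. over those pairs of `P` whose interval meets `E` and whose tag lies in `E`. -/
noncomputable def TaggedPartition.restSum {a b : ℝ} (P : TaggedPartition a b) (F : ℝ → ℝ)
    (E : Set ℝ) : ℝ :=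
  ∑ i ∈ Finset.range P.n,
    if (Set.Icc (P.t i) (P.t (i + 1)) ∩ E).Nonempty ∧ P.tag i ∈ E then
      F (P.t (i + 1)) - F (P.t i)
    else 0

/-- `F` is basically summable (BS_δ) on `E` to `R`. -/
def BasicallySummable (a b : ℝ) (F : ℝ → ℝ) (E : Set ℝ) (R : ℝ) : Prop :=
  ∀ ε > 0, ∃ δ : ℝ → ℝ, IsGauge a b δ ∧
    ∀ P : TaggedPartition a b, P.IsFine δ → P.TagsIn E → |P.restSum F E - R| < ε

/-- `g` is generalized Riemann (Henstock–Kurzweil) integrable on `[a,b]` to `I`,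
using `δ`-fine partitions in `𝒫_δ[a,b]|_E`. -/
def HKIntegrableTo (a b : ℝ) (E : Set ℝ) (g : ℝ → ℝ) (I : ℝ) : Prop :=
  ∀ ε > 0, ∃ δ : ℝ → ℝ, IsGauge a b δ ∧
    ∀ P : TaggedPartition a b, P.IsFine δ → P.TagsIn E → |P.riemannSum g - I| < ε

/-!
Fix `η > 0`. At a tag `x ∉ E`, differentiability makes `f x * (v - u)` equal to `F v - F u` up to
`η * (v - u)` for every short interval `[u, v] ∋ x` with endpoints off `E`, and the requirement
that intervals meeting `E` be tagged in `E` guarantees such endpoints. A tag in `E` contributes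
nothing to the Riemann sum of `f_ex`, and exactly its increment of `F_ex` to the sum over `P|_E`.
So the Riemann sum and the sum over `P|_E` together differ from the telescoping sum `F b - F a` by
at most `η * (b - a)`, and one of the two has a limit exactly when the other has.
-/

section Straddle

variable {V : Type*} [NormedAddCommGroup V] [NormedSpace ℝ V]

theorem exists_straddle_of_hasDerivWithinAt {F : ℝ → V} {F' : V} {s : Set ℝ} {x η : ℝ}
    (hF : HasDerivWithinAt F F' s x) (hη : 0 < η) :
    ∃ d > 0, ∀ u ∈ s, ∀ v ∈ s, x ∈ Set.Icc u v → Set.Icc u v ⊆ Set.Ioo (x - d) (x + d) →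
      ‖(v - u) • F' - (F v - F u)‖ ≤ η * (v - u) := by
  obtain ⟨d, hd, hball⟩ := Metric.mem_nhdsWithin_iff.1 (hF.isLittleO.def hη)
  refine ⟨d, hd, fun u hu v hv hx hfine => ?_⟩
  have approx : ∀ y ∈ s, y ∈ Set.Icc u v → ‖F y - F x - (y - x) • F'‖ ≤ η * |y - x| :=
    fun y hys hy => hball ⟨Real.ball_eq_Ioo x d ▸ hfine hy, hys⟩
  have left := approx u hu ⟨le_rfl, hx.1.trans hx.2⟩
  have right := approx v hv ⟨hx.1.trans hx.2, le_rfl⟩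
  rw [abs_of_nonpos (sub_nonpos.2 hx.1)] at left
  rw [abs_of_nonneg (sub_nonneg.2 hx.2)] at right
  calc ‖(v - u) • F' - (F v - F u)‖
      = ‖(F u - F x - (u - x) • F') - (F v - F x - (v - x) • F')‖ := by congr 1; module
    _ ≤ η * -(u - x) + η * (v - x) := norm_sub_le_of_le left right
    _ = η * (v - u) := by ring

end Straddle

namespace TaggedPartition

variable {a b : ℝ} (P : TaggedPartition a b)

theorem monotoneOn_t : MonotoneOn P.t (Set.Iic P.n) :=
  monotoneOn_of_le_succ Set.ordConnected_Iic fun i _ _ hi => P.mono i hi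

theorem t_mem_Icc {i : ℕ} (hi : i ≤ P.n) : P.t i ∈ Set.Icc a b :=
  ⟨P.t_zero.symm.trans_le (P.monotoneOn_t (Nat.zero_le _) hi (Nat.zero_le i)),
    (P.monotoneOn_t hi Set.self_mem_Iic hi).trans_eq P.t_last⟩

theorem tag_mem_Icc {i : ℕ} (hi : i < P.n) : P.tag i ∈ Set.Icc a b :=
  Set.Icc_subset_Icc (P.t_mem_Icc hi.le).1 (P.t_mem_Icc hi).2 (P.tag_mem i hi)

theorem sum_increments (F : ℝ → ℝ) :
    ∑ i ∈ Finset.range P.n, (F (P.t (i + 1)) - F (P.t i)) = F b - F a := by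
  rw [Finset.sum_range_sub (fun i => F (P.t i)), P.t_zero, P.t_last]

variable {P}

theorem IsFine.mono {δ δ' : ℝ → ℝ} (hP : P.IsFine δ) (hδ : δ ≤ δ') : P.IsFine δ' :=
  fun i hi => (hP i hi).trans
    (Set.Ioo_subset_Ioo (sub_le_sub_left (hδ _) _) (add_le_add_right (hδ _) _))

theorem TagsIn.notMem_of_mem_Icc {E : Set ℝ} (hP : P.TagsIn E) {i : ℕ} (hi : i < P.n)
    (htag : P.tag i ∉ E) {x : ℝ} (hx : x ∈ Set.Icc (P.t i) (P.t (i + 1))) : x ∉ E :=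
  fun hxE => htag (hP i hi ⟨x, hx, hxE⟩)

variable (P)

theorem riemannSum_add_restSum_sub {E : Set ℝ} {f : ℝ → ℝ} (hf : Set.EqOn f 0 E) (F : ℝ → ℝ) :
    P.riemannSum f + P.restSum F E - (F b - F a) =
      ∑ i ∈ Finset.range P.n, if P.tag i ∈ E then 0 else
        f (P.tag i) * (P.t (i + 1) - P.t i) - (F (P.t (i + 1)) - F (P.t i)) := by
  rw [← P.sum_increments, riemannSum, restSum, ← Finset.sum_add_distrib,
    ← Finset.sum_sub_distrib]
  refine Finset.sum_congr rfl fun i hi => ?_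
  by_cases htag : P.tag i ∈ E
  · have hmeets : (Set.Icc (P.t i) (P.t (i + 1)) ∩ E).Nonempty :=
      ⟨P.tag i, P.tag_mem i (Finset.mem_range.1 hi), htag⟩
    simp [htag, hmeets, hf htag]
  · simp [htag]

theorem abs_riemannSum_add_restSum_sub_le {E : Set ℝ} {F f : ℝ → ℝ} {η : ℝ}
    (hf : Set.EqOn f 0 E) (hη : 0 ≤ η)
    (h : ∀ i < P.n, P.tag i ∉ E →
      |f (P.tag i) * (P.t (i + 1) - P.t i) - (F (P.t (i + 1)) - F (P.t i))| ≤
        η * (P.t (i + 1) - P.t i)) :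
    |P.riemannSum f + P.restSum F E - (F b - F a)| ≤ η * (b - a) := by
  have hlength : ∑ i ∈ Finset.range P.n, (P.t (i + 1) - P.t i) = b - a := P.sum_increments id
  rw [P.riemannSum_add_restSum_sub hf, ← hlength, Finset.mul_sum]
  refine (Finset.abs_sum_le_sum_abs _ _).trans (Finset.sum_le_sum fun i hi => ?_)
  have hi : i < P.n := Finset.mem_range.1 hi
  split_ifs with htag
  · rw [abs_zero]
    exact mul_nonneg hη (sub_nonneg.2 (P.mono i hi))
  · exact h i hi htag

end TaggedPartition

/-- `S P` tends to `L` as the `δ`-fine partitions `P` in `𝒫_δ[a,b]|_E` are refined. For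
`S P = P.riemannSum g` this is `HKIntegrableTo`, for `S P = P.restSum F E` it is
`BasicallySummable`. -/
def GaugeLimit (a b : ℝ) (E : Set ℝ) (S : TaggedPartition a b → ℝ) (L : ℝ) : Prop :=
  ∀ ε > 0, ∃ δ : ℝ → ℝ, IsGauge a b δ ∧
    ∀ P : TaggedPartition a b, P.IsFine δ → P.TagsIn E → |S P - L| < ε

section Limits

variable {a b : ℝ} {E : Set ℝ}

theorem GaugeLimit.sub {S T : TaggedPartition a b → ℝ} {K L : ℝ}
    (hS : GaugeLimit a b E S K) (hT : GaugeLimit a b E T L) :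
    GaugeLimit a b E (fun P => S P - T P) (K - L) := by
  intro ε hε
  obtain ⟨δ₁, hδ₁, hS⟩ := hS (ε / 2) (half_pos hε)
  obtain ⟨δ₂, hδ₂, hT⟩ := hT (ε / 2) (half_pos hε)
  refine ⟨δ₁ ⊓ δ₂, fun x hx => lt_min (hδ₁ x hx) (hδ₂ x hx), fun P hP hPE => ?_⟩
  calc |S P - T P - (K - L)| = |(S P - K) - (T P - L)| := by rw [sub_sub_sub_comm]
    _ ≤ |S P - K| + |T P - L| := abs_sub _ _
    _ < ε / 2 + ε / 2 :=
      add_lt_add (hS P (hP.mono inf_le_left) hPE) (hT P (hP.mono inf_le_right) hPE)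
    _ = ε := add_halves ε

theorem gaugeLimit_riemannSum_add_restSum {F f : ℝ → ℝ}
    (hF : ∀ x ∈ Set.Icc a b \ E, HasDerivWithinAt F (f x) (Set.Icc a b \ E) x)
    (hf : Set.EqOn f 0 E) :
    GaugeLimit a b E (fun P => P.riemannSum f + P.restSum F E) (F b - F a) := by
  intro ε hε
  obtain ⟨η, hη, hηε⟩ := exists_pos_mul_lt hε (b - a)
  choose! δ hδ straddle using fun x hx => exists_straddle_of_hasDerivWithinAt (hF x hx) hη
  refine ⟨fun x => if x ∈ E then 1 else δ x, fun x hx => ?_, fun P hP hPE => ?_⟩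
  · dsimp only
    split_ifs with hxE
    exacts [one_pos, hδ x ⟨hx, hxE⟩]
  · refine (P.abs_riemannSum_add_restSum_sub_le hf hη.le fun i hi htag => ?_).trans_lt
      (by rwa [mul_comm])
    have hle : P.t i ≤ P.t (i + 1) := P.mono i hi
    have hleft : P.t i ∈ Set.Icc a b \ E :=
      ⟨P.t_mem_Icc hi.le, hPE.notMem_of_mem_Icc hi htag (Set.left_mem_Icc.2 hle)⟩
    have hright : P.t (i + 1) ∈ Set.Icc a b \ E :=
      ⟨P.t_mem_Icc hi, hPE.notMem_of_mem_Icc hi htag (Set.right_mem_Icc.2 hle)⟩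
    have hfine := hP i hi
    simp only [if_neg htag] at hfine
    simpa only [smul_eq_mul, mul_comm (f _), Real.norm_eq_abs] using
      straddle _ ⟨P.tag_mem_Icc hi, htag⟩ _ hleft _ hright (P.tag_mem i hi) hfine

theorem hkIntegrableTo_iff_basicallySummable {F f : ℝ → ℝ}
    (hF : ∀ x ∈ Set.Icc a b \ E, HasDerivWithinAt F (f x) (Set.Icc a b \ E) x)
    (hf : Set.EqOn f 0 E) {R : ℝ} :
    HKIntegrableTo a b E f ((F b - F a) - R) ↔ BasicallySummable a b F E R := by
  have hsum := gaugeLimit_riemannSum_add_restSum hF hf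
  constructor
  · intro hHK
    have hdiff := hsum.sub (T := fun P => P.riemannSum f) hHK
    simp only [add_sub_cancel_left, sub_sub_cancel] at hdiff
    exact hdiff
  · intro hBS
    have hdiff := hsum.sub (T := fun P => P.restSum F E) hBS
    simp only [add_sub_cancel_right] at hdiff
    exact hdiff

theorem statement0_general (ha : a ∉ E) (hb : b ∉ E) {F f : ℝ → ℝ}
    (hF : ∀ x ∈ Set.Icc a b \ E, HasDerivWithinAt F (f x) (Set.Icc a b \ E) x) {R : ℝ} :
    HKIntegrableTo a b E (fun x => if x ∈ E then 0 else f x) ((F b - F a) - R) ↔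
      BasicallySummable a b (fun x => if x ∈ E then 0 else F x) E R := by
  have hF_ex : ∀ x ∈ Set.Icc a b \ E, HasDerivWithinAt (fun x => if x ∈ E then 0 else F x)
      (if x ∈ E then 0 else f x) (Set.Icc a b \ E) x := fun x hx => by
    rw [if_neg hx.2]
    exact (hF x hx).congr_of_mem (fun y hy => if_neg hy.2) hx
  simpa only [if_neg ha, if_neg hb] using
    hkIntegrableTo_iff_basicallySummable (R := R) hF_ex fun x hx => if_pos hx

end Limits

/-- If `F` is differentiable with derivative `f` on `[a,b] \ E`,
where `E ⊂ (a,b)` has Lebesgue measure zero, and `F` (extended by `0` on `E`) is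
basically summable on `E` to `R`, then `f_ex` is Henstock–Kurzweil integrable on
`[a,b]` with integral `(F b - F a) - R`. -/
theorem statement0 (a b : ℝ) (hab : a ≤ b) (E : Set ℝ) (hE : E ⊆ Set.Ioo a b)
    (hE0 : MeasureTheory.volume E = 0) (F f : ℝ → ℝ)
    (hF : ∀ x ∈ Set.Icc a b \ E, HasDerivWithinAt F (f x) (Set.Icc a b) x)
    (R : ℝ)
    (hBS : BasicallySummable a b (fun x => if x ∈ E then 0 else F x) E R) :
    HKIntegrableTo a b E (fun x => if x ∈ E then 0 else f x) ((F b - F a) - R) :=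
  (statement0_general (fun ha => (hE ha).1.false) (fun hb => (hE hb).2.false)
    fun x hx => (hF x hx).mono Set.sdiff_subset).2 hBS
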